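/- Assume that for every p ∈ G the vectors X(p), e₃, [e₃,X](p) form a basis of ℝ³. Then the following are equivalent: (i) there exists a smooth everywhere-positive function f : V → ℝ such that the vector field (μ∘π)·(f∘π)·X has identically vanishing divergence on G (equivalently, div_ν((f∘π)·X) = 0 on G); (ii) the 1-form ξ : G → (ℝ³)* determined pointwise by the three conditions ⟨ξ(p), X(p)⟩ = div_ν X(p), ⟨ξ(p), e₃⟩ = 0, ⟨ξ(p), [e₃,X](p)⟩ = L_{e₃}(div_ν X)(p) is closed. -/

import Mathlib

/-!
Since `div (μ f X) = μ (f div_ν X + L_X f)` for `f` a function on the base, condition (i) says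
that `⟨-d (log f ∘ π), X⟩ = div_ν X`. The exact form `η = -d (log f ∘ π)` kills `e₃`, and being
closed it is then constant along `e₃`, so differentiating `⟨η, X⟩ = div_ν X` along `e₃` gives
`⟨η, [e₃, X]⟩ = L_{e₃} (div_ν X)`. Hence `η` and `ξ` agree on the frame `X, e₃, [e₃, X]`, and
`ξ = η` is closed.

Conversely, a closed `ξ` with `⟨ξ, e₃⟩ = 0` is constant along the (connected) fibers, so it is the
pullback of a closed form on `V`. As `V` is simply connected that form is `dg`, and `f = exp (-g)`
satisfies (i).

The Poincaré lemma on a simply connected open set (`exists_primitive_of_simplyConnected`) is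
deduced from the one on balls: the local primitives define a covering space of `V` with discrete
fiber `ℝ` (`primitiveCore`), and a section of it, obtained by lifting the identity of `V`, is a
global primitive.
-/

/-- The total space `ℝ³ = ℝ² × ℝ` of the bundle, base `ℝ²` times fiber `ℝ`. -/
abbrev TotalSp : Type := (ℝ × ℝ) × ℝ

/-- The vertical unit vector `e₃ = (0,0,1)`. -/
def eThree : TotalSp := ((0, 0), 1)

/-- The Lie bracket `[X,Y](p) = DY(p)(X(p)) − DX(p)(Y(p))` of vector fields. -/
noncomputable def lieBracketVF (X Y : TotalSp → TotalSp) (p : TotalSp) : TotalSp :=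
  fderiv ℝ Y p (X p) - fderiv ℝ X p (Y p)

/-- The (flat) divergence of a vector field: the trace of its Fréchet derivative. -/
noncomputable def divVF (W : TotalSp → TotalSp) (p : TotalSp) : ℝ :=
  LinearMap.trace ℝ TotalSp (fderiv ℝ W p).toLinearMap

/-- The divergence with respect to the density `ν(z,y) = μ(z)`:
`div_ν W = div((μ∘π)·W)/(μ∘π)`. -/
noncomputable def divNu (μ : ℝ × ℝ → ℝ) (W : TotalSp → TotalSp) (p : TotalSp) : ℝ :=
  divVF (fun q => μ q.1 • W q) p / μ p.1

open Filter Topology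

/-- The real line with the discrete topology: the fiber of the covering space of local
primitives. -/
@[ext]
structure DiscreteReal where
  /-- The underlying real number. -/
  val : ℝ

instance : TopologicalSpace DiscreteReal := ⊥

instance : DiscreteTopology DiscreteReal := ⟨rfl⟩

/-- The covering space attached to functions `F i` on the sets `U i` any two of which differ by a
locally constant function: over `U i`, the point with coordinate `t` stands for the germ of
`F i + t`, so passing from chart `i` to chart `j` adds `F i - F j`. -/
def primitiveCore {B : Type*} [TopologicalSpace B] (U : B → Set B)
    (hU : ∀ x, IsOpen (U x)) (hmem : ∀ x, x ∈ U x) (F : B → B → ℝ)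
    (hF : ∀ i j, ∀ z ∈ U i ∩ U j, ∀ᶠ w in 𝓝 z, F i w - F j w = F i z - F j z) :
    FiberBundleCore B B DiscreteReal where
  baseSet := U
  isOpen_baseSet := hU
  indexAt := id
  mem_baseSet_at := hmem
  coordChange i j z t := ⟨t.val + (F i z - F j z)⟩
  coordChange_self i x _ v := by
    ext
    simp
  continuousOn_coordChange i j := by
    rintro ⟨z, t⟩ ⟨hz, -⟩
    refine ContinuousAt.continuousWithinAt ?_
    refine (continuousAt_const (y := (⟨t.val + (F i z - F j z)⟩ : DiscreteReal))).congr ?_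
    have h1 : ∀ᶠ p : B × DiscreteReal in 𝓝 (z, t), F i p.1 - F j p.1 = F i z - F j z :=
      (continuousAt_fst (p := (z, t))).eventually (hF i j z hz)
    have h2 : ∀ᶠ p : B × DiscreteReal in 𝓝 (z, t), p.2 = t := by
      have : ∀ᶠ s in 𝓝 t, s = t := by rw [nhds_discrete]; simp
      exact (continuousAt_snd (p := (z, t))).eventually this
    filter_upwards [h1, h2] with p hp1 hp2
    rw [hp1, hp2]
  coordChange_comp i j k x _ v := by
    ext
    ring

/-- Functions that pairwise differ by locally constant functions glue, up to locally constant
functions, over a simply connected base: the covering space `primitiveCore` has a section. -/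
theorem exists_glue_of_simplyConnected {B : Type*} [TopologicalSpace B]
    [SimplyConnectedSpace B] [LocallyPathConnectedSpace B] (U : B → Set B)
    (hU : ∀ x, IsOpen (U x)) (hmem : ∀ x, x ∈ U x) (F : B → B → ℝ)
    (hF : ∀ i j, ∀ z ∈ U i ∩ U j, ∀ᶠ w in 𝓝 z, F i w - F j w = F i z - F j z) :
    ∃ g : B → ℝ, ∀ z, ∀ᶠ w in 𝓝 z, g w - F z w = g z - F z z := by
  let Z := primitiveCore U hU hmem F hF
  have hcov : IsCoveringMap Z.proj := FiberBundle.isCoveringMap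
  obtain ⟨b₀⟩ : Nonempty B := inferInstance
  obtain ⟨s, ⟨-, hs⟩, -⟩ := hcov.existsUnique_continuousMap_lifts (ContinuousMap.id B) b₀
    (⟨b₀, (⟨0⟩ : DiscreteReal)⟩ : Z.TotalSpace) rfl
  have hs1 : ∀ z, (s z).1 = z := fun z => congrFun hs z
  refine ⟨fun z => DiscreteReal.val (s z).2 + F (s z).1 z, fun z => ?_⟩
  -- In the chart at `z` the fiber coordinate of the section is `g - F z`; it is continuous
  -- with discrete values.
  have hc : ContinuousAt (fun w => (Z.localTriv z (s w)).2) z := by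
    have h1 : ContinuousAt (Z.localTriv z) (s z) := by
      refine (Z.localTriv z).continuousAt ?_
      rw [Z.mem_localTriv_source, hs1]
      exact hmem z
    exact continuousAt_snd.comp (h1.comp s.continuous.continuousAt)
  have hev : ∀ᶠ w in 𝓝 z, (Z.localTriv z (s w)).2 = (Z.localTriv z (s z)).2 := by
    have : ∀ᶠ t in 𝓝 (Z.localTriv z (s z)).2, t = (Z.localTriv z (s z)).2 := by
      rw [nhds_discrete]; simp
    exact hc.eventually this
  have hval : ∀ w, (Z.localTriv z (s w)).2.val
      = DiscreteReal.val (s w).2 + (F (s w).1 w - F z w) := by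
    intro w
    rw [Z.localTriv_apply]
    change DiscreteReal.val (s w).2 + (F (s w).1 (s w).1 - F z (s w).1) = _
    rw [show F (s w).1 (s w).1 = F (s w).1 w from congrArg _ (hs1 w), hs1 w]
  filter_upwards [hev] with w hw
  have hw' := congrArg DiscreteReal.val hw
  rw [hval, hval] at hw'
  linarith

/-- The Poincaré lemma for `1`-forms on a simply connected open set. -/
theorem exists_primitive_of_simplyConnected {E : Type*} [NormedAddCommGroup E]
    [NormedSpace ℝ E] {V : Set E} (hV : IsOpen V) [SimplyConnectedSpace V]
    {ω : E → E →L[ℝ] ℝ} (hω : DifferentiableOn ℝ ω V)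
    (hsymm : ∀ z ∈ V, ∀ u v, fderiv ℝ ω z u v = fderiv ℝ ω z v u) :
    ∃ g : E → ℝ, ∀ z ∈ V, HasFDerivAt g (ω z) z := by
  classical
  have := hV.locallyPathConnectedSpace
  have hr : ∀ x : V, ∃ r > 0, Metric.ball (x : E) r ⊆ V := fun x =>
    Metric.isOpen_iff.1 hV x x.2
  choose r hr0 hrV using hr
  have hloc : ∀ x : V, ∃ f : E → ℝ, ∀ a ∈ Metric.ball (x : E) (r x), HasFDerivAt f (ω a) a :=
    fun x => (convex_ball _ _).exists_forall_hasFDerivAt_of_fderiv_symmetric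
      Metric.isOpen_ball (hω.mono (hrV x)) (fun a ha => hsymm a (hrV x ha))
  choose F hF using hloc
  obtain ⟨g, hg⟩ := exists_glue_of_simplyConnected
    (fun x : V => (Subtype.val ⁻¹' Metric.ball (x : E) (r x) : Set V))
    (fun x => Metric.isOpen_ball.preimage continuous_subtype_val)
    (fun x => Metric.mem_ball_self (hr0 x)) (fun x w => F x w) (by
      rintro i j z ⟨hzi, hzj⟩
      have hzi' : (z : E) ∈ Metric.ball (i : E) (r i) := hzi
      have hzj' : (z : E) ∈ Metric.ball (j : E) (r j) := hzj
      have hd : ∀ a ∈ Metric.ball (i : E) (r i) ∩ Metric.ball (j : E) (r j),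
          HasFDerivAt (fun w => F i w - F j w) (0 : E →L[ℝ] ℝ) a := fun a ha => by
        simpa using! (hF i a ha.1).sub (hF j a ha.2)
      have hopen : IsOpen (Metric.ball (i : E) (r i) ∩ Metric.ball (j : E) (r j)) :=
        Metric.isOpen_ball.inter Metric.isOpen_ball
      have hconv := (convex_ball (i : E) (r i)).inter (convex_ball (j : E) (r j))
      filter_upwards [continuous_subtype_val.continuousAt.preimage_mem_nhds
        (hopen.mem_nhds ⟨hzi', hzj'⟩)] with w hw
      exact hopen.is_const_of_fderiv_eq_zero (𝕜 := ℝ) hconv.isPreconnected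
        (fun a ha => (hd a ha).differentiableAt.differentiableWithinAt)
        (fun a ha => (hd a ha).fderiv) hw ⟨hzi', hzj'⟩)
  refine ⟨fun x => if h : x ∈ V then g ⟨x, h⟩ else 0, fun z hz => ?_⟩
  have h1 : HasFDerivAt (fun w => F ⟨z, hz⟩ w + (g ⟨z, hz⟩ - F ⟨z, hz⟩ z)) (ω z) z :=
    (hF ⟨z, hz⟩ z (Metric.mem_ball_self (hr0 _))).add_const _
  refine h1.congr_of_eventuallyEq ?_
  have h2 := hg ⟨z, hz⟩
  rw [nhds_subtype_eq_comap, Filter.eventually_comap] at h2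
  filter_upwards [h2, hV.mem_nhds hz] with w hw hwV
  have := hw ⟨w, hwV⟩ rfl
  simp only [hwV, dif_pos]
  linarith

theorem divVF_smul {h : TotalSp → ℝ} {W : TotalSp → TotalSp} {p : TotalSp}
    (hh : DifferentiableAt ℝ h p) (hW : DifferentiableAt ℝ W p) :
    divVF (fun q => h q • W q) p = h p * divVF W p + fderiv ℝ h p (W p) := by
  unfold divVF
  rw [fderiv_fun_smul hh hW]
  have : ((h p • fderiv ℝ W p + (fderiv ℝ h p).smulRight (W p) : TotalSp →L[ℝ] TotalSp) :
      TotalSp →ₗ[ℝ] TotalSp) = h p • (fderiv ℝ W p).toLinearMap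
        + (fderiv ℝ h p).toLinearMap.smulRight (W p) := by
    ext <;> simp
  rw [this, map_add, map_smul, LinearMap.trace_smulRight]
  simp

/-- `div (μ f X) = μ (f div_ν X + L_X f)` for `f` depending on the base point only. -/
theorem divVF_mul_smul {μ f : ℝ × ℝ → ℝ} {X : TotalSp → TotalSp} {p : TotalSp}
    (hμ : DifferentiableAt ℝ μ p.1) (hf : DifferentiableAt ℝ f p.1)
    (hX : DifferentiableAt ℝ X p) (hne : μ p.1 ≠ 0) :
    divVF (fun q => (μ q.1 * f q.1) • X q) p
      = μ p.1 * (f p.1 * divNu μ X p + fderiv ℝ f p.1 (X p).1) := by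
  have hμ' : DifferentiableAt ℝ (fun q : TotalSp => μ q.1) p :=
    DifferentiableAt.comp p hμ differentiableAt_fst
  have hf' : HasFDerivAt (fun q : TotalSp => f q.1)
      ((fderiv ℝ f p.1).comp (ContinuousLinearMap.fst ℝ (ℝ × ℝ) ℝ)) p :=
    HasFDerivAt.comp p hf.hasFDerivAt hasFDerivAt_fst
  have h1 : (fun q : TotalSp => (μ q.1 * f q.1) • X q)
      = fun q => f q.1 • (μ q.1 • X q) := by
    funext q; rw [smul_smul, mul_comm]
  rw [h1, divVF_smul hf'.differentiableAt (hμ'.fun_smul hX), hf'.fderiv]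
  unfold divNu
  simp only [ContinuousLinearMap.comp_apply, ContinuousLinearMap.coe_fst', map_smul,
    smul_eq_mul]
  field_simp

/-- A closed `1`-form annihilating the fixed vector `e` is constant in the direction `e`. -/
theorem fderiv_apply_eq_zero_of_symm {E : Type*} [NormedAddCommGroup E] [NormedSpace ℝ E]
    {η : E → E →L[ℝ] ℝ} {p e : E} (hη : DifferentiableAt ℝ η p)
    (hsymm : ∀ u v, fderiv ℝ η p u v = fderiv ℝ η p v u)
    (he : ∀ᶠ q in 𝓝 p, η q e = 0) : fderiv ℝ η p e = 0 := by
  ext w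
  have h1 : HasFDerivAt (fun q => η q e) ((fderiv ℝ η p).flip e) p := by
    simpa using! hη.hasFDerivAt.clm_apply (hasFDerivAt_const e p)
  have h2 : HasFDerivAt (fun q => η q e) (0 : E →L[ℝ] ℝ) p :=
    (hasFDerivAt_const (0 : ℝ) p).congr_of_eventuallyEq he
  rw [hsymm]
  simpa using DFunLike.congr_fun (h1.unique h2) w

/-- **Theorem 6 of the paper, in a chart.**  Let `V ⊆ ℝ²` be open and simply connected,
`I` an open interval, `G := V × I`, `X` a smooth nowhere zero vector field on `G`, and
`μ` a smooth everywhere-positive density on `V`.  Assume the complete non-integrability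
condition: for every `p ∈ G` the vectors `X(p), e₃, [e₃,X](p)` form a basis of `ℝ³`.
Then the following are equivalent: (i) there exists a smooth everywhere-positive
`f : V → ℝ` such that the vector field `(μ∘π)·(f∘π)·X` has identically vanishing
divergence on `G` (i.e. `div_ν((f∘π)·X) = 0` on `G`); (ii) the 1-form `ξ` determined
pointwise by `⟨ξ(p), X(p)⟩ = div_ν X(p)`, `⟨ξ(p), e₃⟩ = 0`,
`⟨ξ(p), [e₃,X](p)⟩ = L_{e₃}(div_ν X)(p)` is closed. -/
theorem oriented_conservation_law_iff_closed_xi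
    (V : Set (ℝ × ℝ)) (hV : IsOpen V) (hVsc : SimplyConnectedSpace V)
    (I : Set ℝ) (hI : IsOpen I) (hIc : I.OrdConnected)
    (X : TotalSp → TotalSp) (hX : ContDiffOn ℝ (⊤ : ℕ∞) X (V ×ˢ I))
    (hXne : ∀ p ∈ V ×ˢ I, X p ≠ 0)
    (μ : ℝ × ℝ → ℝ) (hμ : ContDiffOn ℝ (⊤ : ℕ∞) μ V) (hμpos : ∀ z ∈ V, 0 < μ z)
    (hbasis : ∀ p ∈ V ×ˢ I,
      LinearIndependent ℝ ![X p, eThree, lieBracketVF (fun _ => eThree) X p] ∧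
      Submodule.span ℝ {X p, eThree, lieBracketVF (fun _ => eThree) X p} = ⊤)
    (ξ : TotalSp → (TotalSp →L[ℝ] ℝ)) (hξ : ContDiffOn ℝ (⊤ : ℕ∞) ξ (V ×ˢ I))
    (hξX : ∀ p ∈ V ×ˢ I, ξ p (X p) = divNu μ X p)
    (hξe : ∀ p ∈ V ×ˢ I, ξ p eThree = 0)
    (hξbr : ∀ p ∈ V ×ˢ I, ξ p (lieBracketVF (fun _ => eThree) X p) =
      fderiv ℝ (fun q => divNu μ X q) p eThree) :
    (∃ f : ℝ × ℝ → ℝ, ContDiffOn ℝ (⊤ : ℕ∞) f V ∧ (∀ z ∈ V, 0 < f z) ∧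
      ∀ p ∈ V ×ˢ I, divVF (fun q => (μ q.1 * f q.1) • X q) p = 0) ↔
    (∀ p ∈ V ×ˢ I, ∀ u w : TotalSp, fderiv ℝ ξ p u w = fderiv ℝ ξ p w u) := by
  have hG : IsOpen (V ×ˢ I) := hV.prod hI
  have hXd : ∀ p ∈ V ×ˢ I, DifferentiableAt ℝ X p := fun p hp =>
    (hX.contDiffAt (hG.mem_nhds hp)).differentiableAt (by simp)
  have hμd : ∀ z ∈ V, DifferentiableAt ℝ μ z := fun z hz =>
    (hμ.contDiffAt (hV.mem_nhds hz)).differentiableAt (by simp)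
  have hξd : ∀ p ∈ V ×ˢ I, DifferentiableAt ℝ ξ p := fun p hp =>
    (hξ.contDiffAt (hG.mem_nhds hp)).differentiableAt (by simp)
  constructor
  · rintro ⟨f, hf, hfpos, hdiv⟩
    have hfd : ∀ z ∈ V, DifferentiableAt ℝ f z := fun z hz =>
      (hf.contDiffAt (hV.mem_nhds hz)).differentiableAt (by simp)
    set H : TotalSp → ℝ := fun q => -Real.log (f q.1) with hHdef
    have hH : ∀ p ∈ V ×ˢ I, ContDiffAt ℝ (⊤ : ℕ∞) H p := by
      intro p hp
      have h1 : ContDiffAt ℝ (⊤ : ℕ∞) (fun q : TotalSp => f q.1) p :=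
        ContDiffAt.comp p (hf.contDiffAt (hV.mem_nhds hp.1)) contDiffAt_fst
      exact (h1.log (hfpos _ hp.1).ne').neg
    have hH' : ∀ p ∈ V ×ˢ I, ∀ w, fderiv ℝ H p w = -((f p.1)⁻¹ * fderiv ℝ f p.1 w.1) := by
      intro p hp w
      have h1 : HasFDerivAt (fun q : TotalSp => f q.1)
          ((fderiv ℝ f p.1).comp (ContinuousLinearMap.fst ℝ (ℝ × ℝ) ℝ)) p :=
        HasFDerivAt.comp p (hfd _ hp.1).hasFDerivAt hasFDerivAt_fst
      have h2 : HasFDerivAt H _ p := (h1.log (hfpos _ hp.1).ne').neg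
      rw [h2.fderiv]
      simp
    have hsymm : ∀ p ∈ V ×ˢ I, ∀ u w,
        fderiv ℝ (fderiv ℝ H) p u w = fderiv ℝ (fderiv ℝ H) p w u := fun p hp =>
      (hH p hp).isSymmSndFDerivAt (by
        rw [minSmoothness_of_isRCLikeNormedField]
        exact WithTop.coe_le_coe.2 (le_top : (2 : ℕ∞) ≤ ⊤))
    have hηd : ∀ p ∈ V ×ˢ I, DifferentiableAt ℝ (fderiv ℝ H) p := fun p hp =>
      ((hH p hp).fderiv_right (m := 1) (by norm_cast)).differentiableAt (by simp)
    have hηe : ∀ p ∈ V ×ˢ I, fderiv ℝ H p eThree = 0 := by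
      intro p hp
      rw [hH' p hp]
      have : (eThree.1 : ℝ × ℝ) = 0 := rfl
      simp [this]
    have hηX : ∀ p ∈ V ×ˢ I, fderiv ℝ H p (X p) = divNu μ X p := by
      intro p hp
      have h1 := hdiv p hp
      rw [divVF_mul_smul (hμd _ hp.1) (hfd _ hp.1) (hXd p hp) (hμpos _ hp.1).ne'] at h1
      have h2 := (mul_eq_zero.1 h1).resolve_left (hμpos _ hp.1).ne'
      have h3 := (hfpos _ hp.1).ne'
      rw [hH' p hp]
      field_simp
      linarith
    have hηbr : ∀ p ∈ V ×ˢ I, fderiv ℝ H p (lieBracketVF (fun _ => eThree) X p) =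
        fderiv ℝ (fun q => divNu μ X q) p eThree := by
      intro p hp
      have h1 : (fun q => divNu μ X q) =ᶠ[𝓝 p] fun q => fderiv ℝ H q (X q) := by
        filter_upwards [hG.mem_nhds hp] with q hq using (hηX q hq).symm
      have h0 : fderiv ℝ (fderiv ℝ H) p eThree = 0 :=
        fderiv_apply_eq_zero_of_symm (hηd p hp) (hsymm p hp) (by
          filter_upwards [hG.mem_nhds hp] with q hq using hηe q hq)
      rw [h1.fderiv_eq, ((hηd p hp).hasFDerivAt.clm_apply (hXd p hp).hasFDerivAt).fderiv]
      simp [lieBracketVF, h0]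
    -- `ξ` and `-d (log f ∘ π)` agree on the frame, hence everywhere.
    have heq : ∀ p ∈ V ×ˢ I, ξ p = fderiv ℝ H p := by
      intro p hp
      have h : (ξ p).toLinearMap = (fderiv ℝ H p).toLinearMap := by
        refine LinearMap.ext_on (hbasis p hp).2 ?_
        rintro v (rfl | rfl | rfl)
        · exact (hξX p hp).trans (hηX p hp).symm
        · exact (hξe p hp).trans (hηe p hp).symm
        · exact (hξbr p hp).trans (hηbr p hp).symm
      exact ContinuousLinearMap.coe_injective h
    intro p hp u w
    have h1 : ξ =ᶠ[𝓝 p] fderiv ℝ H := by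
      filter_upwards [hG.mem_nhds hp] with q hq using heq q hq
    rw [h1.fderiv_eq]
    exact hsymm p hp u w
  · intro hclosed
    rcases I.eq_empty_or_nonempty with rfl | ⟨y₀, hy₀⟩
    · exact ⟨fun _ => 1, contDiffOn_const, fun _ _ => one_pos, fun p hp => absurd hp.2 (by simp)⟩
    -- `ξ` does not depend on the fiber coordinate.
    have hconst : ∀ z ∈ V, ∀ y ∈ I, ξ (z, y) = ξ (z, y₀) := by
      intro z hz y hy
      have hd : ∀ t ∈ I, HasDerivAt (fun t => ξ (z, t)) 0 t := by
        intro t ht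
        have h0 : fderiv ℝ ξ (z, t) eThree = 0 :=
          fderiv_apply_eq_zero_of_symm (hξd _ ⟨hz, ht⟩) (hclosed _ ⟨hz, ht⟩) (by
            filter_upwards [hG.mem_nhds (show (z, t) ∈ V ×ˢ I from ⟨hz, ht⟩)] with q hq
              using hξe q hq)
        have h1 : HasDerivAt (fun t : ℝ => ((z, t) : TotalSp)) eThree t :=
          (hasDerivAt_const t z).prodMk (hasDerivAt_id t)
        have h2 := (hξd (z, t) ⟨hz, ht⟩).hasFDerivAt.comp_hasDerivAt t h1
        rwa [h0] at h2
      exact hI.is_const_of_deriv_eq_zero (𝕜 := ℝ) hIc.isPreconnected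
        (fun t ht => (hd t ht).differentiableAt.differentiableWithinAt)
        (fun t ht => (hd t ht).deriv) hy hy₀
    let ι : (ℝ × ℝ) →L[ℝ] TotalSp := ContinuousLinearMap.inl ℝ (ℝ × ℝ) ℝ
    let R : (TotalSp →L[ℝ] ℝ) →L[ℝ] ((ℝ × ℝ) →L[ℝ] ℝ) :=
      (ContinuousLinearMap.compL ℝ (ℝ × ℝ) TotalSp ℝ).flip ι
    -- The form on the base whose pullback is `ξ`.
    set ω : ℝ × ℝ → (ℝ × ℝ) →L[ℝ] ℝ := fun z => R (ξ (z, y₀)) with hωdef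
    have hωs : ContDiffOn ℝ (⊤ : ℕ∞) ω V := by
      refine R.contDiff.comp_contDiffOn (hξ.comp (contDiff_prodMk_left y₀).contDiffOn ?_)
      exact fun z hz => ⟨hz, hy₀⟩
    have hωd : ∀ z ∈ V, HasFDerivAt ω (R.comp ((fderiv ℝ ξ (z, y₀)).comp ι)) z := by
      intro z hz
      have h1 : HasFDerivAt (fun z : ℝ × ℝ => ((z, y₀) : TotalSp)) ι z :=
        hasFDerivAt_prodMk_left z y₀
      exact R.hasFDerivAt.comp z ((hξd (z, y₀) ⟨hz, hy₀⟩).hasFDerivAt.comp z h1)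
    obtain ⟨g, hg⟩ := exists_primitive_of_simplyConnected hV
      (fun z hz => (hωd z hz).differentiableAt.differentiableWithinAt)
      (fun z hz u v => by
        rw [(hωd z hz).fderiv]
        exact hclosed (z, y₀) ⟨hz, hy₀⟩ (ι u) (ι v))
    have hgs : ContDiffOn ℝ (⊤ : ℕ∞) g V := by
      rw [contDiffOn_infty_iff_fderiv_of_isOpen hV]
      exact ⟨fun z hz => (hg z hz).differentiableAt.differentiableWithinAt,
        hωs.congr fun z hz => (hg z hz).fderiv⟩
    refine ⟨fun z => Real.exp (-g z), hgs.neg.exp, fun z _ => Real.exp_pos _, ?_⟩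
    rintro ⟨z, y⟩ ⟨hz, hy⟩
    have hfz : HasFDerivAt (fun z => Real.exp (-g z)) _ z := (hg z hz).neg.exp
    have hξω : ξ (z, y) (X (z, y)) = ω z (X (z, y)).1 := by
      have h1 : X (z, y) = ι (X (z, y)).1 + (X (z, y)).2 • eThree := by
        ext <;> simp [ι, eThree]
      conv_lhs => rw [h1]
      rw [map_add, map_smul, hξe _ ⟨hz, hy⟩, smul_zero, add_zero, hconst z hz y hy]
      rfl
    rw [divVF_mul_smul (hμd z hz) hfz.differentiableAt (hXd _ ⟨hz, hy⟩) (hμpos z hz).ne',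
      hfz.fderiv, ← hξX _ ⟨hz, hy⟩, hξω]
    simp
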